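/- For every real x > 0, ∫₀^∞ e^{-2πx²τ/3} · √3 · η(iτ)η(6iτ)²/(η(3iτ)η(2iτ)) dτ = √3 · sinh(πx/3)² / (x · sinh(πx)). -/

import Mathlib

open scoped Real

noncomputable def eta (z : ℂ) : ℂ :=
  Complex.exp (Real.pi * Complex.I * z / 12) *
    ∏' n : ℕ, (1 - Complex.exp (2 * Real.pi * Complex.I * ((n : ℂ) + 1) * z))

/-!
By the Jacobi triple product in base `q ^ 3` at `-q⁻²`, with `q = exp (2πiz)`, the eta quotient is
the theta series `∑ (-1) ^ n * exp (2πi(3n - 1)²z / 3)` over `n ∈ ℤ`. Its Laplace transform,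
taken term by term, is a multiple of `∑ (-1) ^ n / (x² + (3n - 1)²)`, and the partial fraction
expansion of the cosecant sums this series.
-/

open Filter Topology
open Finset (range)

section QPochhammer

/-- The `q`-Pochhammer symbol `(q; q)_n`, a finite truncation of Euler's product. -/
def qPochhammer {R : Type*} [CommRing R] (q : R) (n : ℕ) : R := ∏ k ∈ range n, (1 - q ^ (k + 1))

/-- Euler's function `(q; q)_∞`, the infinite product underlying the Dedekind eta function. -/
noncomputable def eulerFunction {R : Type*} [CommRing R] [TopologicalSpace R] (q : R) : R :=
  ∏' k : ℕ, (1 - q ^ (k + 1))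

/-- The reciprocal `1 / (q; q)_m` for an integer index `m`, extended by `0` to negative `m`. This is
the convention which makes `qPochhammerInv_sub_one` hold for all `m`, so that sums of products of
these reciprocals can be taken over all of `ℤ`. -/
def qPochhammerInv {K : Type*} [Field K] (q : K) : ℤ → K
  | .ofNat n => (qPochhammer q n)⁻¹
  | .negSucc _ => 0

@[simp]
lemma qPochhammer_zero {R : Type*} [CommRing R] (q : R) : qPochhammer q 0 = 1 := by
  simp [qPochhammer]

lemma qPochhammer_succ {R : Type*} [CommRing R] (q : R) (n : ℕ) :
    qPochhammer q (n + 1) = qPochhammer q n * (1 - q ^ (n + 1)) := by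
  rw [qPochhammer, Finset.prod_range_succ, ← qPochhammer]

variable {K : Type*} [NormedField K] {q : K}

lemma qPochhammerInv_natCast (q : K) (n : ℕ) : qPochhammerInv q n = (qPochhammer q n)⁻¹ := rfl

lemma qPochhammerInv_of_neg (q : K) {m : ℤ} (hm : m < 0) : qPochhammerInv q m = 0 := by
  obtain ⟨n, rfl⟩ := Int.eq_negSucc_of_lt_zero hm
  rfl

lemma one_sub_pow_succ_ne_zero (hq : ‖q‖ < 1) (n : ℕ) : 1 - q ^ (n + 1) ≠ 0 := by
  refine sub_ne_zero.mpr fun h ↦ (pow_lt_one₀ (norm_nonneg q) hq n.succ_ne_zero).ne ?_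
  rw [Nat.succ_eq_add_one, ← norm_pow, ← h, norm_one]

lemma qPochhammerInv_sub_one (hq : ‖q‖ < 1) (m : ℤ) :
    qPochhammerInv q (m - 1) = (1 - q ^ m) * qPochhammerInv q m := by
  rcases lt_trichotomy m 0 with hm | rfl | hm
  · rw [qPochhammerInv_of_neg q hm, qPochhammerInv_of_neg q (by lia), mul_zero]
  · rw [qPochhammerInv_of_neg q (by lia), zpow_zero, sub_self, zero_mul]
  · obtain ⟨n, rfl⟩ : ∃ n : ℕ, m = (n + 1 : ℕ) := ⟨(m - 1).toNat, by lia⟩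
    have := one_sub_pow_succ_ne_zero hq n
    rw [Nat.cast_succ, add_sub_cancel_right, ← Nat.cast_succ, qPochhammerInv_natCast,
      qPochhammerInv_natCast, zpow_natCast, qPochhammer_succ]
    field_simp

lemma norm_pow_lt_one (hq : ‖q‖ < 1) {m : ℕ} (hm : m ≠ 0) : ‖q ^ m‖ < 1 :=
  norm_pow q m ▸ pow_lt_one₀ (norm_nonneg q) hq hm

lemma summable_norm_mul_pow_mul_add (hq : ‖q‖ < 1) {m : ℕ} (hm : m ≠ 0) (z : K) (r : ℕ) :
    Summable fun k : ℕ ↦ ‖z * q ^ (m * k + r)‖ := by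
  have hgeom := summable_geometric_of_lt_one (norm_nonneg _) (norm_pow_lt_one hq hm)
  refine (hgeom.mul_left ‖z * q ^ r‖).congr fun k ↦ ?_
  rw [← norm_pow, ← norm_mul]
  ring_nf

variable [CompleteSpace K]

lemma multipliable_one_add_mul_pow_mul_add (hq : ‖q‖ < 1) {m : ℕ} (hm : m ≠ 0) (z : K) (r : ℕ) :
    Multipliable fun k : ℕ ↦ 1 + z * q ^ (m * k + r) :=
  multipliable_one_add_of_summable (summable_norm_mul_pow_mul_add hq hm z r)

lemma multipliable_one_sub_pow_mul_add (hq : ‖q‖ < 1) {m : ℕ} (hm : m ≠ 0) (r : ℕ) :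
    Multipliable fun k : ℕ ↦ 1 - q ^ (m * k + r) := by
  simpa [sub_eq_add_neg] using multipliable_one_add_mul_pow_mul_add hq hm (-1) r

lemma eulerFunction_ne_zero (hq : ‖q‖ < 1) : eulerFunction q ≠ 0 := by
  have hsum := summable_norm_mul_pow_mul_add hq one_ne_zero (-1) 1
  simp only [one_mul, neg_mul] at hsum
  simp only [eulerFunction, sub_eq_add_neg]
  refine tprod_one_add_ne_zero_of_summable (fun n ↦ ?_) hsum
  simpa only [← sub_eq_add_neg] using one_sub_pow_succ_ne_zero hq n

lemma tendsto_qPochhammer (hq : ‖q‖ < 1) :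
    Tendsto (qPochhammer q) atTop (𝓝 (eulerFunction q)) := by
  have hmul := multipliable_one_sub_pow_mul_add hq one_ne_zero 1
  simp only [one_mul] at hmul
  exact hmul.hasProd.tendsto_prod_nat

lemma tendsto_qPochhammer_mul (hq : ‖q‖ < 1) {m : ℕ} (hm : m ≠ 0) :
    Tendsto (fun N ↦ qPochhammer q (m * N)) atTop (𝓝 (eulerFunction q)) :=
  (tendsto_qPochhammer hq).comp (tendsto_id.const_mul_atTop' (Nat.pos_of_ne_zero hm))

lemma tendsto_qPochhammerInv (hq : ‖q‖ < 1) :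
    Tendsto (qPochhammerInv q) atTop (𝓝 (eulerFunction q)⁻¹) := by
  rw [← Nat.map_cast_int_atTop, tendsto_map'_iff]
  exact (tendsto_qPochhammer hq).inv₀ (eulerFunction_ne_zero hq)

lemma exists_norm_qPochhammer_le (hq : ‖q‖ < 1) : ∃ C, ∀ n, ‖qPochhammer q n‖ ≤ C := by
  simpa using (Metric.isBounded_range_of_tendsto _ (tendsto_qPochhammer hq)).exists_norm_le

lemma exists_norm_qPochhammerInv_le (hq : ‖q‖ < 1) : ∃ C, ∀ m, ‖qPochhammerInv q m‖ ≤ C := by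
  have hlim := (tendsto_qPochhammer hq).inv₀ (eulerFunction_ne_zero hq)
  obtain ⟨C, hC⟩ := (Metric.isBounded_range_of_tendsto _ hlim).exists_norm_le
  have hC : ∀ n, ‖(qPochhammer q n)⁻¹‖ ≤ C := by simpa using hC
  refine ⟨C, fun m ↦ ?_⟩
  rcases m with n | n
  · exact hC n
  · simpa [qPochhammerInv] using (norm_nonneg _).trans (hC 0)

end QPochhammer

section JacobiTripleProduct

variable {K : Type*} [NormedField K] {q z : K}

/-- The coefficient of `q ^ n ^ 2 * z ^ n` in the triple product truncated to `N` factors: the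
Gaussian binomial coefficient `[2N choose N + n]` in base `q ^ 2`, which is `0` for `N < |n|`. -/
def tripleProductCoeff (q : K) (N : ℕ) (n : ℤ) : K :=
  qPochhammer (q ^ 2) (2 * N) *
    (qPochhammerInv (q ^ 2) (N + n) * qPochhammerInv (q ^ 2) (N - n))

lemma tripleProductCoeff_zero_of_ne (q : K) {n : ℤ} (hn : n ≠ 0) :
    tripleProductCoeff q 0 n = 0 := by
  rcases hn.lt_or_gt with hn | hn
  · rw [tripleProductCoeff, qPochhammerInv_of_neg _ (by simpa), zero_mul, mul_zero]
  · rw [tripleProductCoeff, qPochhammerInv_of_neg (m := (0 : ℕ) - n) _ (by simpa)]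
    simp only [mul_zero]

lemma tripleProductCoeff_zero_zero (q : K) : tripleProductCoeff q 0 0 = 1 := by
  have : qPochhammerInv (q ^ 2) 0 = 1 := by simpa using qPochhammerInv_natCast (q ^ 2) 0
  simp [tripleProductCoeff, this]

/-- The recursion is multiplication by `(1 + z * q ^ (2 * N + 1)) * (1 + z⁻¹ * q ^ (2 * N + 1))`. -/
lemma tripleProductCoeff_succ (hq0 : q ≠ 0) (hq : ‖q‖ < 1) (hz : z ≠ 0) (N : ℕ) (n : ℤ) :
    tripleProductCoeff q (N + 1) n * (q ^ n ^ 2 * z ^ n) =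
      (1 + q ^ (4 * N + 2)) * (tripleProductCoeff q N n * (q ^ n ^ 2 * z ^ n)) +
      z * q ^ (2 * N + 1) *
        (tripleProductCoeff q N (n - 1) * (q ^ (n - 1) ^ 2 * z ^ (n - 1))) +
      z⁻¹ * q ^ (2 * N + 1) *
        (tripleProductCoeff q N (n + 1) * (q ^ (n + 1) ^ 2 * z ^ (n + 1))) := by
  have hshift := qPochhammerInv_sub_one (norm_pow_lt_one hq two_ne_zero)
  set u := qPochhammerInv (q ^ 2) (N + 1 + n) with hu
  set v := qPochhammerInv (q ^ 2) (N + 1 - n) with hv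
  have hu₁ : qPochhammerInv (q ^ 2) (N + n) = (1 - (q ^ 2) ^ (N + 1 + n)) * u := by
    rw [hu, ← hshift]; congr 1; ring
  have hv₁ : qPochhammerInv (q ^ 2) (N - n) = (1 - (q ^ 2) ^ (N + 1 - n)) * v := by
    rw [hv, ← hshift]; congr 1; ring
  have hu₂ : qPochhammerInv (q ^ 2) (N + (n - 1)) =
      (1 - (q ^ 2) ^ (N + n)) * ((1 - (q ^ 2) ^ (N + 1 + n)) * u) := by
    rw [← hu₁, ← hshift]; congr 1; ring
  have hv₂ : qPochhammerInv (q ^ 2) (N - (n + 1)) =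
      (1 - (q ^ 2) ^ (N - n)) * ((1 - (q ^ 2) ^ (N + 1 - n)) * v) := by
    rw [← hv₁, ← hshift]; congr 1; ring
  have hu₀ : qPochhammerInv (q ^ 2) (N + (n + 1)) = u := by rw [hu]; congr 1; ring
  have hv₀ : qPochhammerInv (q ^ 2) (N - (n - 1)) = v := by rw [hv]; congr 1; ring
  have hsq_sub : q ^ (n - 1) ^ 2 = q ^ n ^ 2 * (q ^ n)⁻¹ ^ 2 * q := by
    rw [← zpow_neg, ← zpow_natCast, ← zpow_mul, ← zpow_add₀ hq0, ← zpow_add_one₀ hq0]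
    congr 1; push_cast; ring
  have hsq_add : q ^ (n + 1) ^ 2 = q ^ n ^ 2 * (q ^ n) ^ 2 * q := by
    rw [← zpow_natCast (q ^ n), ← zpow_mul, ← zpow_add₀ hq0, ← zpow_add_one₀ hq0]
    congr 1; push_cast; ring
  have hP : q ^ 2 ≠ 0 := pow_ne_zero 2 hq0
  have hPn : (q ^ 2) ^ n = (q ^ n) ^ 2 := by
    rw [← zpow_natCast, ← zpow_natCast, zpow_comm]
  simp only [tripleProductCoeff, Nat.cast_add, Nat.cast_one, ← hu, ← hv, hu₀, hu₁, hu₂, hv₀, hv₁,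
    hv₂, hsq_sub, hsq_add, mul_add_one, qPochhammer_succ, zpow_add₀ hP, zpow_sub₀ hP, hPn,
    zpow_add_one₀ hz, zpow_sub_one₀ hz, zpow_one, zpow_natCast]
  have := zpow_ne_zero n hq0
  field_simp
  ring

/-- Cauchy's finite form of the Jacobi triple product. -/
lemma hasSum_tripleProductCoeff (hq0 : q ≠ 0) (hq : ‖q‖ < 1) (hz : z ≠ 0) (N : ℕ) :
    HasSum (fun n : ℤ ↦ tripleProductCoeff q N n * (q ^ n ^ 2 * z ^ n))
      ((∏ k ∈ range N, (1 + z * q ^ (2 * k + 1))) *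
        ∏ k ∈ range N, (1 + z⁻¹ * q ^ (2 * k + 1))) := by
  induction N with
  | zero =>
    have := hasSum_single (f := fun n : ℤ ↦ tripleProductCoeff q 0 n * (q ^ n ^ 2 * z ^ n)) 0
      fun n hn ↦ by rw [tripleProductCoeff_zero_of_ne q hn, zero_mul]
    simpa [tripleProductCoeff_zero_zero] using this
  | succ N ih =>
    have hpred := (Equiv.subRight (1 : ℤ)).hasSum_iff.mpr ih
    have hsucc := (Equiv.addRight (1 : ℤ)).hasSum_iff.mpr ih
    convert! ((ih.mul_left (1 + q ^ (4 * N + 2))).add (hpred.mul_left (z * q ^ (2 * N + 1)))).add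
      (hsucc.mul_left (z⁻¹ * q ^ (2 * N + 1))) using 1
    · funext n
      exact tripleProductCoeff_succ hq0 hq hz N n
    · rw [Finset.prod_range_succ, Finset.prod_range_succ]
      field_simp
      ring

lemma summable_norm_pow_sq_mul_pow (hq0 : q ≠ 0) (hq : ‖q‖ < 1) (hz : z ≠ 0) :
    Summable fun n : ℕ ↦ ‖q ^ n ^ 2 * z ^ n‖ := by
  refine summable_of_ratio_test_tendsto_lt_one zero_lt_one (.of_forall fun n ↦ ?_) ?_
  · exact norm_ne_zero_iff.mpr (mul_ne_zero (pow_ne_zero _ hq0) (pow_ne_zero _ hz))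
  · have hlim : Tendsto (fun n : ℕ ↦ ‖q‖ ^ (2 * n + 1) * ‖z‖) atTop (𝓝 (0 * ‖z‖)) :=
      ((tendsto_pow_atTop_nhds_zero_of_lt_one (norm_nonneg q) hq).comp
        (tendsto_atTop_mono (fun n ↦ (by lia : n ≤ 2 * n + 1)) tendsto_id)).mul_const _
    rw [zero_mul] at hlim
    refine hlim.congr fun n ↦ ?_
    simp only [norm_norm, norm_mul, norm_pow]
    field_simp
    ring

lemma summable_norm_zpow_sq_mul_zpow (hq0 : q ≠ 0) (hq : ‖q‖ < 1) (hz : z ≠ 0) :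
    Summable fun n : ℤ ↦ ‖q ^ n ^ 2 * z ^ n‖ := by
  rw [summable_int_iff_summable_nat_and_neg]
  constructor
  · simpa [← zpow_natCast] using summable_norm_pow_sq_mul_pow hq0 hq hz
  · simpa [← zpow_natCast] using summable_norm_pow_sq_mul_pow hq0 hq (inv_ne_zero hz)

variable [CompleteSpace K]

lemma tendsto_tripleProductCoeff (hq : ‖q‖ < 1) (n : ℤ) :
    Tendsto (tripleProductCoeff q · n) atTop (𝓝 (eulerFunction (q ^ 2))⁻¹) := by
  have hP := norm_pow_lt_one hq two_ne_zero
  have hinv := tendsto_qPochhammerInv hP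
  have hadd : Tendsto (fun N : ℕ ↦ (N : ℤ) + n) atTop atTop :=
    tendsto_atTop_add_const_right _ n tendsto_natCast_atTop_atTop
  have hsub : Tendsto (fun N : ℕ ↦ (N : ℤ) - n) atTop atTop :=
    tendsto_atTop_add_const_right _ (-n) tendsto_natCast_atTop_atTop
  have := (tendsto_qPochhammer_mul hP two_ne_zero).mul ((hinv.comp hadd).mul (hinv.comp hsub))
  rwa [mul_inv_cancel_left₀ (eulerFunction_ne_zero hP)] at this

lemma exists_norm_tripleProductCoeff_le (hq : ‖q‖ < 1) :
    ∃ C, ∀ N n, ‖tripleProductCoeff q N n‖ ≤ C := by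
  obtain ⟨A, hA⟩ := exists_norm_qPochhammer_le (norm_pow_lt_one hq two_ne_zero)
  obtain ⟨B, hB⟩ := exists_norm_qPochhammerInv_le (norm_pow_lt_one hq two_ne_zero)
  refine ⟨A * (B * B), fun N n ↦ ?_⟩
  exact norm_mul_le_of_le (hA _) (norm_mul_le_of_le (hB _) (hB _))

theorem jacobi_triple_product (hq0 : q ≠ 0) (hq : ‖q‖ < 1) (hz : z ≠ 0) :
    HasSum (fun n : ℤ ↦ q ^ n ^ 2 * z ^ n)
      (eulerFunction (q ^ 2) *
        ((∏' k : ℕ, (1 + z * q ^ (2 * k + 1))) * ∏' k : ℕ, (1 + z⁻¹ * q ^ (2 * k + 1)))) := by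
  have hsum := summable_norm_zpow_sq_mul_zpow hq0 hq hz
  obtain ⟨C, hC⟩ := exists_norm_tripleProductCoeff_le hq
  have hseries : Tendsto
      (fun N ↦ ∑' n : ℤ, tripleProductCoeff q N n * (q ^ n ^ 2 * z ^ n)) atTop
      (𝓝 (∑' n : ℤ, (eulerFunction (q ^ 2))⁻¹ * (q ^ n ^ 2 * z ^ n))) := by
    refine tendsto_tsum_of_dominated_convergence (hsum.mul_left C)
      (fun n ↦ (tendsto_tripleProductCoeff hq n).mul_const _) (.of_forall fun N n ↦ ?_)
    rw [norm_mul]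
    gcongr
    exact hC N n
  have hprod (w : K) := (multipliable_one_add_mul_pow_mul_add hq two_ne_zero w 1).hasProd
  have hlim := tendsto_nhds_unique
    ((hprod z).tendsto_prod_nat.mul (hprod z⁻¹).tendsto_prod_nat)
    (hseries.congr fun N ↦ (hasSum_tripleProductCoeff hq0 hq hz N).tsum_eq)
  have hne := eulerFunction_ne_zero (norm_pow_lt_one hq two_ne_zero)
  rw [hlim, tsum_mul_left, mul_inv_cancel_left₀ hne]
  exact hsum.of_norm.hasSum

end JacobiTripleProduct

section EtaQuotient

lemma qPochhammer_six_mul {R : Type*} [CommRing R] (q : R) (N : ℕ) :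
    qPochhammer q (6 * N) * qPochhammer (q ^ 6) N =
      ((∏ k ∈ range N, (1 - q ^ (6 * k + 1))) * ∏ k ∈ range N, (1 - q ^ (6 * k + 5))) *
        (qPochhammer (q ^ 3) (2 * N) * qPochhammer (q ^ 2) (3 * N)) := by
  induction N with
  | zero => simp
  | succ N ih =>
    simp only [Nat.mul_succ, Finset.prod_range_succ, qPochhammer_succ]
    linear_combination ((1 - q ^ (6 * N + 1)) * (1 - q ^ (6 * N + 2)) * (1 - q ^ (6 * N + 3)) *
      (1 - q ^ (6 * N + 4)) * (1 - q ^ (6 * N + 5)) * (1 - q ^ (6 * N + 6)) ^ 2) * ih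

section

variable {K : Type*} [NormedField K] [CompleteSpace K] {q : K}

lemma eulerFunction_mul_eulerFunction_pow_six (hq : ‖q‖ < 1) :
    eulerFunction q * eulerFunction (q ^ 6) =
      ((∏' k : ℕ, (1 - q ^ (6 * k + 1))) * ∏' k : ℕ, (1 - q ^ (6 * k + 5))) *
        (eulerFunction (q ^ 3) * eulerFunction (q ^ 2)) := by
  have hprod (r : ℕ) :=
    (multipliable_one_sub_pow_mul_add hq (m := 6) (by norm_num) r).hasProd.tendsto_prod_nat
  have hleft := (tendsto_qPochhammer_mul hq (m := 6) (by norm_num)).mul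
    (tendsto_qPochhammer (norm_pow_lt_one hq (m := 6) (by norm_num)))
  have hright := ((hprod 1).mul (hprod 5)).mul
    ((tendsto_qPochhammer_mul (norm_pow_lt_one hq three_ne_zero) two_ne_zero).mul
      (tendsto_qPochhammer_mul (norm_pow_lt_one hq two_ne_zero) three_ne_zero))
  exact tendsto_nhds_unique (hleft.congr (qPochhammer_six_mul q)) hright

theorem hasSum_eulerFunction_quotient (hq0 : q ≠ 0) (hq : ‖q‖ < 1) :
    HasSum (fun n : ℤ ↦ (-1) ^ n * q ^ (3 * n ^ 2 - 2 * n))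
      (eulerFunction q * eulerFunction (q ^ 6) ^ 2 /
        (eulerFunction (q ^ 3) * eulerFunction (q ^ 2))) := by
  have hz : -(q ^ 2)⁻¹ ≠ 0 := neg_ne_zero.mpr (inv_ne_zero (pow_ne_zero 2 hq0))
  have hfst (k : ℕ) : 1 + -(q ^ 2)⁻¹ * (q ^ 3) ^ (2 * k + 1) = 1 - q ^ (6 * k + 1) := by
    field_simp
    ring
  have hsnd (k : ℕ) : 1 + (-(q ^ 2)⁻¹)⁻¹ * (q ^ 3) ^ (2 * k + 1) = 1 - q ^ (6 * k + 5) := by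
    rw [inv_neg, inv_inv]
    ring
  have hterm (n : ℤ) :
      (q ^ 3) ^ n ^ 2 * (-(q ^ 2)⁻¹) ^ n = (-1) ^ n * q ^ (3 * n ^ 2 - 2 * n) := by
    rw [neg_eq_neg_one_mul, mul_zpow, mul_left_comm, inv_zpow', ← zpow_natCast, ← zpow_natCast,
      ← zpow_mul, ← zpow_mul, ← zpow_add₀ hq0]
    congr 2
    push_cast
    ring
  have hjacobi :=
    jacobi_triple_product (pow_ne_zero 3 hq0) (norm_pow_lt_one hq three_ne_zero) hz
  simp only [hfst, hsnd, hterm] at hjacobi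
  rw [← pow_mul] at hjacobi
  have hne₂ := eulerFunction_ne_zero (norm_pow_lt_one hq two_ne_zero)
  have hne₃ := eulerFunction_ne_zero (norm_pow_lt_one hq three_ne_zero)
  convert! hjacobi using 1
  rw [div_eq_iff (mul_ne_zero hne₃ hne₂)]
  linear_combination eulerFunction (q ^ 6) * eulerFunction_mul_eulerFunction_pow_six hq

end

lemma eta_natCast_mul (m : ℕ) (z : ℂ) :
    eta (m * z) = Complex.exp (π * Complex.I * (m * z) / 12) *
      eulerFunction (Complex.exp (2 * π * Complex.I * z) ^ m) := by
  rw [eta, eulerFunction]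
  congr! 4 with n
  rw [← Complex.exp_nat_mul, ← Complex.exp_nat_mul]
  push_cast
  ring_nf

theorem hasSum_eta_quotient {z : ℂ} (hz : 0 < z.im) :
    HasSum (fun n : ℤ ↦ (-1 : ℂ) ^ n * Complex.exp (2 * π * Complex.I * (3 * n - 1) ^ 2 * z / 3))
      (eta z * eta (6 * z) ^ 2 / (eta (3 * z) * eta (2 * z))) := by
  have hq : ‖Complex.exp (2 * π * Complex.I * z)‖ < 1 := by
    rw [Complex.norm_exp, Real.exp_lt_one_iff]
    simpa using mul_pos Real.two_pi_pos hz
  have hprefactor : Complex.exp (π * Complex.I * z / 12) *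
      Complex.exp (π * Complex.I * (6 * z) / 12) ^ 2 =
      Complex.exp (2 * π * Complex.I * z / 3) * (Complex.exp (π * Complex.I * (3 * z) / 12) *
        Complex.exp (π * Complex.I * (2 * z) / 12)) := by
    simp only [← Complex.exp_nat_mul, ← Complex.exp_add]
    ring_nf
  convert! (hasSum_eulerFunction_quotient (Complex.exp_ne_zero _) hq).mul_left
    (Complex.exp (2 * π * Complex.I * z / 3)) using 1
  · funext n
    rw [mul_left_comm, ← Complex.exp_int_mul, ← Complex.exp_add]
    push_cast
    ring_nf
  · have h₁ := eta_natCast_mul 1 z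
    have h₂ := eta_natCast_mul 2 z
    have h₃ := eta_natCast_mul 3 z
    have h₆ := eta_natCast_mul 6 z
    simp only [Nat.cast_one, Nat.cast_ofNat, one_mul, pow_one] at h₁ h₂ h₃ h₆
    rw [h₁, h₂, h₃, h₆, mul_pow, mul_mul_mul_comm, hprefactor, mul_mul_mul_comm, mul_assoc,
      mul_assoc]
    have := Complex.exp_ne_zero
    field_simp

end EtaQuotient

section PartialFractions

lemma summable_inv_add_int_mul_add_int (z w : ℂ) :
    Summable fun n : ℤ ↦ ((z + n) * (w + n))⁻¹ := by
  refine EisensteinSeries.summable_inv_of_isBigO_rpow_inv (a := 2) one_lt_two ?_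
  have h (u : ℂ) : (fun n : ℤ ↦ (u + n)⁻¹) =O[cofinite] fun n ↦ ((n : ℝ))⁻¹ := by
    simpa using EisensteinSeries.linear_inv_isBigO_right 1 u
  refine ((h z).mul (h w)).congr (fun n ↦ (mul_inv _ _).symm) fun n ↦ ?_
  rw [← mul_inv, Real.rpow_two, sq_abs, sq]

lemma summable_inv_add_int_sq_add (a c : ℂ) :
    Summable fun n : ℤ ↦ ((n + a) ^ 2 + c)⁻¹ := by
  obtain ⟨b, hb⟩ := IsAlgClosed.exists_pow_nat_eq (-c) two_pos
  obtain rfl : c = -b ^ 2 := by rw [hb, neg_neg]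
  refine (summable_inv_add_int_mul_add_int (a - b) (a + b)).congr fun n ↦ ?_
  ring_nf

lemma hasSum_inv_add_int_sub_inv_add_int {z w : ℂ} (hz : z ∈ Complex.integerComplement)
    (hw : w ∈ Complex.integerComplement) :
    HasSum (fun n : ℤ ↦ (z + n)⁻¹ - (w + n)⁻¹)
      (π * Complex.cot (π * z) - π * Complex.cot (π * w)) := by
  have hcot {u : ℂ} (hu : u ∈ Complex.integerComplement) :
      HasSum (cotTerm u) (π * Complex.cot (π * u) - u⁻¹) := by
    rw [← one_div, cot_series_rep' hu]
    exact (summable_cotTerm hu).hasSum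
  obtain ⟨S, hS⟩ : Summable fun n : ℤ ↦ (z + n)⁻¹ - (w + n)⁻¹ := by
    refine ((summable_inv_add_int_mul_add_int z w).mul_left (w - z)).congr fun n ↦ ?_
    have := Complex.integerComplement_add_ne_zero hz n
    have := Complex.integerComplement_add_ne_zero hw n
    field_simp
    ring
  have htail : HasSum (fun n : ℕ ↦ (z + (n + 1 : ℕ))⁻¹ - (w + (n + 1 : ℕ))⁻¹ +
      ((z - (n + 1 : ℕ))⁻¹ - (w - (n + 1 : ℕ))⁻¹))
      (π * Complex.cot (π * z) - z⁻¹ - (π * Complex.cot (π * w) - w⁻¹)) := by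
    refine ((hcot hz).sub (hcot hw)).congr_fun fun n ↦ ?_
    simp only [cotTerm]
    push_cast
    ring
  have hfold := HasSum.nat_add_neg hS
  simp only [Int.cast_natCast, Int.cast_neg, ← sub_eq_add_neg, Int.cast_zero, add_zero] at hfold
  have hvalue := hfold.unique ((hasSum_nat_add_iff 1).mp htail)
  simp only [Finset.range_one, Finset.sum_singleton, Nat.cast_zero, add_zero, sub_zero] at hvalue
  convert! hS using 1
  linear_combination -hvalue

lemma hasSum_neg_one_zpow_mul {K : Type*} [DivisionRing K] [TopologicalSpace K]
    [IsTopologicalRing K] {f : ℤ → K} {s t : K} (heven : HasSum (fun k : ℤ ↦ f (2 * k)) s)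
    (hall : HasSum f t) : HasSum (fun n : ℤ ↦ (-1) ^ n * f n) (2 * s - t) := by
  have hinj : Function.Injective fun k : ℤ ↦ 2 * k := mul_right_injective₀ two_ne_zero
  have hproj : HasSum (fun n : ℤ ↦ (-1) ^ n * f n + f n) (2 * s) := by
    refine (hinj.hasSum_iff fun n hn ↦ ?_).mp ((heven.mul_left 2).congr_fun fun k ↦ ?_)
    · have hodd : Odd n := by
        rw [← Int.not_even_iff_odd, even_iff_exists_two_mul]
        exact fun ⟨k, hk⟩ ↦ hn ⟨k, hk.symm⟩
      rw [hodd.neg_one_zpow, neg_one_mul, neg_add_cancel]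
    · simp only [Function.comp_apply]
      rw [(even_two_mul k).neg_one_zpow, one_mul, two_mul (f _)]
  simpa using hproj.sub hall

lemma pi_mul_cot_half_sub (z : ℂ) :
    π * Complex.cot (π * (z / 2)) - π * Complex.cot (π * z) = π / Complex.sin (π * z) := by
  have hdouble : π * z = 2 * (π * (z / 2)) := by ring
  rw [hdouble, Complex.cot, Complex.cot, Complex.cos_two_mul, Complex.sin_two_mul]
  generalize π * (z / 2) = u
  by_cases hsin : Complex.sin u = 0
  · simp [hsin]
  by_cases hcos : Complex.cos u = 0
  · simp [hcos]
  field_simp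
  ring

lemma half_mem_integerComplement {z : ℂ} (hz : z ∈ Complex.integerComplement) :
    z / 2 ∈ Complex.integerComplement := by
  rw [Complex.mem_integerComplement_iff] at hz ⊢
  rintro ⟨n, hn⟩
  refine hz ⟨2 * n, ?_⟩
  push_cast
  rw [hn, mul_div_cancel₀ _ two_ne_zero]

lemma hasSum_neg_one_zpow_mul_inv_add_int_sub {z w : ℂ} (hz : z ∈ Complex.integerComplement)
    (hw : w ∈ Complex.integerComplement) :
    HasSum (fun n : ℤ ↦ (-1) ^ n * ((z + n)⁻¹ - (w + n)⁻¹))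
      (π / Complex.sin (π * z) - π / Complex.sin (π * w)) := by
  have heven : HasSum (fun k : ℤ ↦ (z + (2 * k : ℤ))⁻¹ - (w + (2 * k : ℤ))⁻¹)
      (2⁻¹ * (π * Complex.cot (π * (z / 2)) - π * Complex.cot (π * (w / 2)))) := by
    refine ((hasSum_inv_add_int_sub_inv_add_int (half_mem_integerComplement hz)
      (half_mem_integerComplement hw)).mul_left 2⁻¹).congr_fun fun k ↦ ?_
    rw [mul_sub, ← mul_inv, ← mul_inv]
    push_cast
    ring_nf
  convert! hasSum_neg_one_zpow_mul (f := fun n : ℤ ↦ (z + n)⁻¹ - (w + n)⁻¹) heven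
    (hasSum_inv_add_int_sub_inv_add_int hz hw) using 1
  rw [← pi_mul_cot_half_sub, ← pi_mul_cot_half_sub]
  ring

lemma inv_sin_sub_mul_I_sub_inv_sin_add_mul_I {a b : ℂ} (hsub : Complex.sin (a - b * Complex.I) ≠ 0)
    (hadd : Complex.sin (a + b * Complex.I) ≠ 0) :
    (Complex.sin (a - b * Complex.I))⁻¹ - (Complex.sin (a + b * Complex.I))⁻¹ =
      4 * Complex.I * (Complex.cos a * Complex.sinh b) /
        (Complex.cosh (2 * b) - Complex.cos (2 * a)) := by
  have hnum : Complex.sin (a + b * Complex.I) - Complex.sin (a - b * Complex.I) =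
      2 * Complex.I * (Complex.cos a * Complex.sinh b) := by
    rw [Complex.sin_sub, Complex.sin_add, Complex.sin_mul_I]
    ring
  have hden : Complex.cosh (2 * b) - Complex.cos (2 * a) =
      2 * (Complex.sin (a - b * Complex.I) * Complex.sin (a + b * Complex.I)) := by
    rw [← Complex.cos_mul_I]
    have hcosh : 2 * b * Complex.I = (a + b * Complex.I) - (a - b * Complex.I) := by ring
    have hcos : 2 * a = (a + b * Complex.I) + (a - b * Complex.I) := by ring
    rw [hcosh, hcos, Complex.cos_sub (a + _), Complex.cos_add (a + _)]
    ring
  rw [hden]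
  field_simp
  linear_combination 2 * hnum

/-- Splitting `1 / ((n + a) ^ 2 + b ^ 2)` into partial fractions turns the series into the
difference of the cosecant series at `a - b * I` and `a + b * I`. -/
theorem hasSum_neg_one_zpow_div_add_sq_add_sq {a b : ℂ} (hb : b ≠ 0)
    (h : ∀ n : ℤ, ((n + a) ^ 2 + b ^ 2) ≠ 0) :
    HasSum (fun n : ℤ ↦ (-1) ^ n / ((n + a) ^ 2 + b ^ 2))
      (2 * π / b * (Complex.cos (π * a) * Complex.sinh (π * b)) /
        (Complex.cosh (2 * (π * b)) - Complex.cos (2 * (π * a)))) := by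
  have hmem {u : ℂ} (hu : (u - a) ^ 2 + b ^ 2 = 0) : u ∈ Complex.integerComplement := by
    rw [Complex.mem_integerComplement_iff]
    rintro ⟨n, rfl⟩
    exact h (-n) (by push_cast; linear_combination hu)
  have hz : a - b * Complex.I ∈ Complex.integerComplement :=
    hmem (by linear_combination b ^ 2 * Complex.I_sq)
  have hw : a + b * Complex.I ∈ Complex.integerComplement :=
    hmem (by linear_combination b ^ 2 * Complex.I_sq)
  convert! (hasSum_neg_one_zpow_mul_inv_add_int_sub hz hw).mul_left (2 * b * Complex.I)⁻¹ using 1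
  · funext n
    have hzn := Complex.integerComplement_add_ne_zero hz n
    have hwn := Complex.integerComplement_add_ne_zero hw n
    have hfac : (n + a) ^ 2 + b ^ 2 = (a - b * Complex.I + n) * (a + b * Complex.I + n) := by
      linear_combination b ^ 2 * Complex.I_sq
    have := Complex.I_ne_zero
    rw [hfac]
    field_simp
    ring
  · have hsin_sub := sin_pi_mul_ne_zero hz
    have hsin_add := sin_pi_mul_ne_zero hw
    have harg_sub : π * (a - b * Complex.I) = π * a - π * b * Complex.I := by ring
    have harg_add : π * (a + b * Complex.I) = π * a + π * b * Complex.I := by ring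
    rw [harg_sub] at hsin_sub ⊢
    rw [harg_add] at hsin_add ⊢
    rw [div_eq_mul_inv (π : ℂ), div_eq_mul_inv (π : ℂ), ← mul_sub,
      inv_sin_sub_mul_I_sub_inv_sin_add_mul_I hsin_sub hsin_add]
    have := Complex.I_ne_zero
    field_simp
    ring

end PartialFractions

section Laplace

open MeasureTheory

lemma hasSum_integral_tsum_mul_exp_neg {ι : Type*} [Countable ι] {c s : ι → ℂ}
    (hs : ∀ i, 0 < (s i).re) (hsum : Summable fun i ↦ ‖c i‖ / (s i).re) :
    HasSum (fun i ↦ c i / s i)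
      (∫ τ in Set.Ioi (0 : ℝ), ∑' i, c i * Complex.exp (-s i * τ)) := by
  have hneg (i) : (-s i).re < 0 := neg_neg_of_pos (hs i)
  have hintegrable (i) : IntegrableOn (fun τ : ℝ ↦ c i * Complex.exp (-s i * τ)) (Set.Ioi 0) :=
    (integrableOn_exp_mul_complex_Ioi (hneg i) 0).const_mul _
  have hnorm (i) : ∫ τ in Set.Ioi (0 : ℝ), ‖c i * Complex.exp (-s i * τ)‖ = ‖c i‖ / (s i).re := by
    simp only [norm_mul, Complex.norm_exp, Complex.re_mul_ofReal, integral_const_mul]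
    rw [integral_exp_mul_Ioi (hneg i)]
    simp [div_eq_mul_inv]
  refine (hasSum_integral_of_summable_integral_norm hintegrable
    (hsum.congr fun i ↦ (hnorm i).symm)).congr_fun fun i ↦ ?_
  rw [integral_const_mul, integral_exp_mul_complex_Ioi (hneg i)]
  simp [div_eq_mul_inv]

end Laplace

section TwoArm

lemma hasSum_neg_one_zpow_div_sq_add_sq {x : ℂ} (hx : x ≠ 0)
    (h : ∀ n : ℤ, x ^ 2 + (3 * n - 1) ^ 2 ≠ 0) :
    HasSum (fun n : ℤ ↦ (-1) ^ n / (x ^ 2 + (3 * n - 1) ^ 2))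
      (2 * π / 3 * (Complex.sinh (π * x / 3) ^ 2 / (x * Complex.sinh (π * x)))) := by
  have hscale (n : ℤ) : x ^ 2 + (3 * n - 1) ^ 2 = 9 * ((n + -1 / 3) ^ 2 + (x / 3) ^ 2) := by ring
  have hsum := (hasSum_neg_one_zpow_div_add_sq_add_sq (a := -1 / 3) (b := x / 3)
    (div_ne_zero hx three_ne_zero)
    fun n ↦ right_ne_zero_of_mul (hscale n ▸ h n)).mul_left 9⁻¹
  have hcos : Complex.cos (π * (-1 / 3)) = 1 / 2 := by
    have := congrArg Complex.ofReal Real.cos_pi_div_three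
    push_cast at this
    rw [← this, ← Complex.cos_neg]
    ring_nf
  have harg : π * (x / 3) = π * x / 3 := by ring
  have htriple : π * x = 3 * (π * x / 3) := by ring
  rw [Complex.cos_two_mul, hcos, harg, Complex.cosh_two_mul, Complex.cosh_sq] at hsum
  convert! hsum using 1
  · funext n
    rw [hscale]
    field_simp
  · rw [htriple, Complex.sinh_three_mul, ← htriple]
    generalize Complex.sinh (π * x / 3) = S
    have hdenom_sinh : 4 * S ^ 3 + 3 * S = S * (4 * S ^ 2 + 3) := by ring
    have hdenom_cosh : S ^ 2 + 1 + S ^ 2 - (2 * (1 / 2) ^ 2 - 1) = (4 * S ^ 2 + 3) / 2 := by ring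
    rw [hdenom_sinh, hdenom_cosh]
    rcases eq_or_ne S 0 with rfl | hS
    · simp
    · field_simp
      ring

lemma summable_inv_add_three_mul_sub_one_sq (r : ℝ) :
    Summable fun n : ℤ ↦ (r + (3 * n - 1) ^ 2)⁻¹ := by
  rw [← Complex.summable_ofReal]
  refine ((summable_inv_add_int_sq_add (-1 / 3) (r / 9)).mul_left 9⁻¹).congr fun n ↦ ?_
  rw [← mul_inv]
  push_cast
  ring_nf

lemma re_sq_add_three_mul_sub_one_sq (x : ℂ) (n : ℤ) :
    (x ^ 2 + (3 * n - 1) ^ 2).re = (x ^ 2).re + (3 * n - 1) ^ 2 := by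
  have hcast : (3 * n - 1 : ℂ) ^ 2 = ((3 * n - 1) ^ 2 : ℝ) := by push_cast; rfl
  rw [hcast, Complex.add_re, Complex.ofReal_re]

lemma re_sq_add_three_mul_sub_one_sq_pos {x : ℂ} (hx : -1 < (x ^ 2).re) (n : ℤ) :
    0 < (x ^ 2 + (3 * n - 1) ^ 2).re := by
  have hne : 3 * n - 1 ≠ 0 := by lia
  have hint : 1 ≤ (3 * n - 1) ^ 2 := Int.add_one_le_iff.mpr (sq_pos_of_ne_zero hne)
  have hreal : (1 : ℝ) ≤ (3 * n - 1) ^ 2 := by exact_mod_cast hint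
  rw [re_sq_add_three_mul_sub_one_sq]
  linarith

lemma integral_tsum_neg_one_zpow_mul_exp {x : ℂ} (hx : x ≠ 0) (hre : -1 < (x ^ 2).re) :
    ∫ τ in Set.Ioi (0 : ℝ),
        ∑' n : ℤ, (-1) ^ n * Complex.exp (-(2 * π / 3 * (x ^ 2 + (3 * n - 1) ^ 2)) * τ) =
      Complex.sinh (π * x / 3) ^ 2 / (x * Complex.sinh (π * x)) := by
  have hpos := re_sq_add_three_mul_sub_one_sq_pos hre
  have hcast : (2 * π / 3 : ℂ) = (2 * π / 3 : ℝ) := by push_cast; rfl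
  have hscale (n : ℤ) : (2 * π / 3 * (x ^ 2 + (3 * n - 1) ^ 2)).re =
      2 * π / 3 * (x ^ 2 + (3 * n - 1) ^ 2).re := by
    rw [hcast, Complex.re_ofReal_mul]
  have hsummable : Summable fun n : ℤ ↦
      ‖(-1 : ℂ) ^ n‖ / (2 * π / 3 * (x ^ 2 + (3 * n - 1) ^ 2)).re := by
    refine ((summable_inv_add_three_mul_sub_one_sq (x ^ 2).re).mul_left
      (2 * π / 3)⁻¹).congr fun n ↦ ?_
    rw [hscale, re_sq_add_three_mul_sub_one_sq, norm_zpow, norm_neg, norm_one, one_zpow, one_div,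
      mul_inv]
  have hintegral := hasSum_integral_tsum_mul_exp_neg
    (fun n ↦ (hscale n).symm ▸ mul_pos (by positivity) (hpos n)) hsummable
  have hvalue := (hasSum_neg_one_zpow_div_sq_add_sq hx
    fun n hn ↦ (hpos n).ne' (hn ▸ Complex.zero_re)).div_const (2 * π / 3)
  rw [mul_div_cancel_left₀ _ (by simp [Real.pi_ne_zero])] at hvalue
  exact hintegral.unique (hvalue.congr_fun fun n ↦ div_mul_eq_div_div_swap ..)

lemma exp_mul_eta_quotient_eq_tsum (x : ℂ) {τ : ℝ} (hτ : 0 < τ) :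
    Complex.exp (-(2 * π * x ^ 2 * τ / 3)) *
        (eta (τ * Complex.I) * eta (6 * τ * Complex.I) ^ 2 /
          (eta (3 * τ * Complex.I) * eta (2 * τ * Complex.I))) =
      ∑' n : ℤ, (-1) ^ n * Complex.exp (-(2 * π / 3 * (x ^ 2 + (3 * n - 1) ^ 2)) * τ) := by
  have hz : 0 < (τ * Complex.I).im := by simpa using hτ
  simp only [mul_assoc _ (τ : ℂ) Complex.I]
  rw [← (hasSum_eta_quotient hz).tsum_eq, ← tsum_mul_left]
  refine tsum_congr fun n ↦ ?_
  rw [mul_left_comm, ← Complex.exp_add]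
  congr 2
  linear_combination (2 * π * (3 * n - 1) ^ 2 * τ / 3) * Complex.I_sq

theorem two_arm_laplace_general {x : ℂ} (hx : x ≠ 0) (hre : -1 < (x ^ 2).re) :
    ∫ τ in Set.Ioi (0 : ℝ),
        Complex.exp (-(2 * π * x ^ 2 * τ / 3)) *
          (Real.sqrt 3 * (eta (τ * Complex.I) * eta (6 * τ * Complex.I) ^ 2) /
            (eta (3 * τ * Complex.I) * eta (2 * τ * Complex.I))) =
      Real.sqrt 3 * Complex.sinh (π * x / 3) ^ 2 / (x * Complex.sinh (π * x)) := by
  simp only [mul_div_assoc (Real.sqrt 3 : ℂ), mul_left_comm _ (Real.sqrt 3 : ℂ)]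
  rw [MeasureTheory.integral_const_mul, ← integral_tsum_neg_one_zpow_mul_exp hx hre,
    MeasureTheory.setIntegral_congr_fun measurableSet_Ioi
      fun τ hτ ↦ exp_mul_eta_quotient_eq_tsum x hτ]

end TwoArm

theorem two_arm_laplace (x : ℝ) (hx : 0 < x) :
    ∫ τ in Set.Ioi (0 : ℝ),
        ((Real.exp (-(2 * Real.pi * x ^ 2 * τ / 3)) : ℝ) : ℂ) *
          ((Real.sqrt 3 : ℂ) * (eta (τ * Complex.I) * eta (6 * τ * Complex.I) ^ 2) /
            (eta (3 * τ * Complex.I) * eta (2 * τ * Complex.I))) =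
      ((Real.sqrt 3 * Real.sinh (Real.pi * x / 3) ^ 2 /
          (x * Real.sinh (Real.pi * x)) : ℝ) : ℂ) := by
  have hre : -1 < ((x : ℂ) ^ 2).re := by
    rw [← Complex.ofReal_pow, Complex.ofReal_re]
    linarith [sq_nonneg x]
  exact_mod_cast two_arm_laplace_general (Complex.ofReal_ne_zero.mpr hx.ne') hre
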